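/- Let V and B be finite types, E : V → B → V → Prop an edge-labeled directed multigraph, S F : V, N : ℕ, and x : B. If there is a walk from S to F with trace t such that x ∉ lruRun N [] t, then there is a walk from S to F with trace t' such that t'.length ≤ 2 * Fintype.card V * Fintype.card B and x ∉ lruRun N [] t'. (Hence the LRU exist-miss problem remains in NP even for cyclic control-flow graphs.) -/

import Mathlib

/-- One access to an LRU cache of associativity `N`. -/
def lruAccess {B : Type*} [DecidableEq B] (N : ℕ) (w : List B) (a : B) : List B :=
  if a ∈ w then w.erase a ++ [a]
  else if w.length < N then w ++ [a]
  else w.tail ++ [a]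

/-- Process a list of accesses in order, starting from state `w`. -/
def lruRun {B : Type*} [DecidableEq B] (N : ℕ) (w t : List B) : List B :=
  t.foldl (lruAccess N) w

/-- `Walk E u v t`: there is a walk from `u` to `v` in the edge-labeled directed
multigraph `E` whose list of edge labels, in order, is `t`. -/
inductive Walk {V B : Type*} (E : V → B → V → Prop) : V → V → List B → Prop
  | nil (v : V) : Walk E v v []
  | cons {u v w : V} {b : B} {t : List B} :
      E u b v → Walk E v w t → Walk E u w (b :: t)

/-!
After the accesses `t`, an LRU cache holds the last `N` entries of the list of distinct blocks
of `t` ordered by last access, which is `t.dedup` since `List.dedup` keeps last occurrences.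
Hence `x` is absent iff it is never accessed or at least `N` distinct blocks are accessed after
its last access. To shorten a walk it therefore suffices to keep the last access to `x` and one
access to each of `N` distinct blocks after it, and to remove all cycles between these accesses.
-/

section List

variable {B : Type*}

theorem exists_eq_append_cons_notMem_right {x : B} {t : List B} (hx : x ∈ t) :
    ∃ p s, t = p ++ x :: s ∧ x ∉ s := by
  obtain ⟨s, p, ht, hs⟩ := List.eq_append_cons_of_mem (List.mem_reverse.2 hx)
  exact ⟨p.reverse, s.reverse, by simpa using congrArg List.reverse ht, by simpa using hs⟩

theorem tail_rtake_succ {l : List B} {n : ℕ} (hn : n < l.length) :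
    (l.rtake (n + 1)).tail = l.rtake n := by
  rw [List.rtake, List.rtake, List.tail_drop]
  congr 1
  lia

variable [DecidableEq B]

theorem dedup_concat (l : List B) (a : B) : (l ++ [a]).dedup = l.dedup.erase a ++ [a] := by
  induction l with
  | nil => simp
  | cons b l ih =>
    by_cases hb : b ∈ l
    · simp [hb, ih]
    · obtain rfl | hba := eq_or_ne b a
      · simp [hb, ih, List.erase_of_not_mem]
      · simp [hb, hba, ih]

theorem rtake_erase_of_mem_rtake {l : List B} {a : B} {n : ℕ} (hl : l.Nodup)
    (ha : a ∈ l.rtake (n + 1)) : (l.erase a).rtake n = (l.rtake (n + 1)).erase a := by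
  have hal : a ∈ l := List.mem_of_mem_drop ha
  have hpos := List.length_pos_of_mem hal
  rw [List.rtake] at ha
  rw [List.rtake, List.rtake, List.length_erase_of_mem hal]
  set j := l.length - (n + 1)
  have ha' : a ∉ l.take j := fun h ↦ List.disjoint_take_drop hl le_rfl h ha
  have herase : l.erase a = l.take j ++ (l.drop j).erase a := by
    rw [← List.erase_append_right _ ha', List.take_append_drop]
  rw [herase]
  exact List.drop_left' (by rw [List.length_take]; lia)

theorem rtake_erase_of_notMem_rtake {l : List B} {a : B} {n : ℕ} (ha : a ∉ l.rtake n) :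
    (l.erase a).rtake n = l.rtake n := by
  by_cases hal : a ∈ l
  · rw [List.rtake] at ha
    rw [List.rtake, List.rtake, List.length_erase_of_mem hal]
    set j := l.length - n
    have ha' : a ∈ l.take j := by
      rw [← List.take_append_drop j l] at hal
      exact (List.mem_append.1 hal).resolve_right ha
    have hpos := List.length_pos_of_mem ha'
    have herase : l.erase a = (l.take j).erase a ++ l.drop j := by
      rw [← List.erase_append_left _ ha', List.take_append_drop]
    rw [List.length_take] at hpos
    rw [herase]
    exact List.drop_left' (by rw [List.length_erase_of_mem ha', List.length_take]; lia)
  · rw [List.erase_of_not_mem hal]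

end List

section LRU

variable {B : Type*} [DecidableEq B] {N : ℕ} {w : List B}

theorem lruRun_concat (N : ℕ) (w t : List B) (a : B) :
    lruRun N w (t ++ [a]) = lruAccess N (lruRun N w t) a := by
  simp [lruRun]

theorem lruAccess_subset (N : ℕ) (w : List B) (a : B) : lruAccess N w a ⊆ w ++ [a] := by
  unfold lruAccess
  split_ifs
  · exact (List.erase_sublist.append_right [a]).subset
  · exact List.Subset.refl _
  · exact ((List.tail_sublist w).append_right [a]).subset

theorem lruRun_subset (N : ℕ) (w t : List B) : lruRun N w t ⊆ w ++ t := by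
  induction t using List.reverseRecOn with
  | nil => simp [lruRun]
  | append_singleton t a ih =>
    rw [lruRun_concat, ← List.append_assoc]
    exact List.Subset.trans (lruAccess_subset N _ a) (List.append_subset.2
      ⟨List.subset_append_of_subset_left [a] ih, List.subset_append_right _ [a]⟩)

-- The size is `max N 1` since `lruAccess` keeps the accessed block even when `N = 0`.
theorem lruAccess_rtake {l : List B} (hl : l.Nodup) (N : ℕ) (a : B) :
    lruAccess N (l.rtake (max N 1)) a = (l.erase a ++ [a]).rtake (max N 1) := by
  obtain ⟨n, hn⟩ : ∃ n, max N 1 = n + 1 := ⟨N - 1, by lia⟩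
  rw [hn, List.rtake_concat_succ, lruAccess]
  have hlen : (l.rtake (n + 1)).length = min l.length (n + 1) := by
    rw [List.rtake, List.length_drop]; lia
  have hsub : l.rtake n ⊆ l.rtake (n + 1) :=
    (List.drop_sublist_drop_left l (by lia)).subset
  split_ifs with ha hN
  · rw [rtake_erase_of_mem_rtake hl ha]
  · have hln : l.length ≤ n := by lia
    rw [rtake_erase_of_notMem_rtake (mt (@hsub a) ha), List.rtake, List.rtake,
      Nat.sub_eq_zero_of_le hln, Nat.sub_eq_zero_of_le (hln.trans n.le_succ)]
  · rw [rtake_erase_of_notMem_rtake (mt (@hsub a) ha)]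
    obtain hln | hln := lt_or_ge n l.length
    · rw [tail_rtake_succ hln]
    · obtain rfl : l = [] := List.eq_nil_of_length_eq_zero (by lia)
      simp

theorem lruRun_eq_rtake_dedup (hw : w.Nodup) (hlen : w.length ≤ max N 1) (t : List B) :
    lruRun N w t = (w ++ t).dedup.rtake (max N 1) := by
  induction t using List.reverseRecOn with
  | nil => simp [lruRun, hw.dedup, List.rtake, hlen]
  | append_singleton t a ih =>
    rw [lruRun_concat, ih, lruAccess_rtake (List.nodup_dedup _), ← dedup_concat,
      List.append_assoc]

theorem mem_lruRun_append_cons_iff (hw : w.Nodup) (hlen : w.length ≤ max N 1) {x : B}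
    (p : List B) {s : List B} (hx : x ∉ s) :
    x ∈ lruRun N w (p ++ x :: s) ↔ s.dedup.length < max N 1 := by
  obtain ⟨v, hv⟩ : ∃ v, v ++ x :: s.dedup = (w ++ (p ++ x :: s)).dedup := by
    rw [← List.append_assoc, List.dedup_append, List.dedup_cons_of_notMem hx]
    exact List.suffix_union_right _ _
  rw [lruRun_eq_rtake_dedup hw hlen, ← hv, List.rtake, List.length_append, List.length_cons]
  constructor
  · intro hmem
    by_contra! hle
    have hdrop : v.length + (s.dedup.length + 1) - max N 1 =
        (v ++ [x]).length + (s.dedup.length - max N 1) := by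
      rw [List.length_append, List.length_singleton]; lia
    rw [List.append_cons, hdrop, List.drop_length_add_append] at hmem
    exact hx (List.mem_dedup.1 (List.mem_of_mem_drop hmem))
  · intro hlt
    rw [List.drop_append_of_le_length (by lia)]
    exact List.mem_append_right _ List.mem_cons_self

end LRU

namespace Walk

open scoped List

variable {V B : Type*} {E : V → B → V → Prop} {u v w : V} {b : B} {p q t : List B}

theorem nil_iff : Walk E u v [] ↔ u = v :=
  ⟨fun | .nil _ => rfl, fun h ↦ h ▸ .nil u⟩

theorem cons_iff : Walk E u w (b :: t) ↔ ∃ v, E u b v ∧ Walk E v w t :=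
  ⟨fun | .cons hb ht => ⟨_, hb, ht⟩, fun ⟨_, hb, ht⟩ ↦ .cons hb ht⟩

theorem append_iff : Walk E u w (p ++ q) ↔ ∃ v, Walk E u v p ∧ Walk E v w q := by
  induction p generalizing u with
  | nil => simp [nil_iff]
  | cons b p ih =>
    simp only [List.cons_append, cons_iff, ih]
    tauto

variable [Fintype V]

theorem exists_sublist_length_lt (h : Walk E u v t) (ht : Fintype.card V ≤ t.length) :
    ∃ t', Walk E u v t' ∧ t' <+ t ∧ t'.length < t.length := by
  have hsplit (i : Fin (t.length + 1)) : ∃ m, Walk E u m (t.take i) ∧ Walk E m v (t.drop i) :=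
    append_iff.1 (by rwa [List.take_append_drop])
  choose m hpre hsuf using hsplit
  obtain ⟨i, j, hij, hm⟩ : ∃ i j, i < j ∧ m i = m j := by
    obtain ⟨i, j, hne, hm⟩ := Fintype.exists_ne_map_eq_of_card_lt m (by simpa [Nat.lt_succ_iff])
    obtain hij | hji := hne.lt_or_gt
    exacts [⟨i, j, hij, hm⟩, ⟨j, i, hji, hm.symm⟩]
  refine ⟨t.take i ++ t.drop j, append_iff.2 ⟨m i, hpre i, hm ▸ hsuf j⟩, ?_, ?_⟩
  · conv_rhs => rw [← List.take_append_drop i t]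
    exact (List.drop_sublist_drop_left t hij.le).append_left _
  · simp only [List.length_append, List.length_take, List.length_drop]
    lia

theorem exists_sublist_length_lt_card (h : Walk E u v t) :
    ∃ t', Walk E u v t' ∧ t' <+ t ∧ t'.length < Fintype.card V := by
  induction hn : t.length using Nat.strong_induction_on generalizing t with
  | _ n ih =>
    obtain ht | ht := lt_or_ge t.length (Fintype.card V)
    · exact ⟨t, h, .refl t, ht⟩
    · obtain ⟨t₁, h₁, hsub₁, hlt⟩ := h.exists_sublist_length_lt ht
      obtain ⟨t₂, h₂, hsub₂, hcard⟩ := ih t₁.length (hn ▸ hlt) h₁ rfl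
      exact ⟨t₂, h₂, hsub₂.trans hsub₁, hcard⟩

theorem exists_sublist_between {d : List B} (h : Walk E u v t) (hd : d <+ t) :
    ∃ t', Walk E u v t' ∧ d <+ t' ∧ t' <+ t ∧
      t'.length < (d.length + 1) * Fintype.card V := by
  induction d generalizing u t with
  | nil =>
    obtain ⟨t', h', hsub, hlt⟩ := h.exists_sublist_length_lt_card
    exact ⟨t', h', List.nil_sublist _, hsub, by simpa using hlt⟩
  | cons b d ih =>
    obtain ⟨r, q, rfl, hb, hdq⟩ := List.cons_sublist_iff.1 hd
    obtain ⟨p, r, rfl⟩ := List.append_of_mem hb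
    rw [List.append_assoc, List.cons_append] at h ⊢
    obtain ⟨m, hp, hbq⟩ := append_iff.1 h
    obtain ⟨m', hstep, hq⟩ := cons_iff.1 hbq
    obtain ⟨p', hp', hpsub, hplt⟩ := hp.exists_sublist_length_lt_card
    obtain ⟨q', hq', hdq', hqsub, hqlt⟩ := ih hq (hdq.trans (List.sublist_append_right r q))
    refine ⟨p' ++ b :: q', append_iff.2 ⟨m, hp', .cons hstep hq'⟩, ?_,
      hpsub.append (hqsub.cons_cons b), ?_⟩
    · exact (hdq'.cons_cons b).trans (List.sublist_append_right _ _)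
    · simp only [List.length_append, List.length_cons]
      linarith

theorem exists_append_cons_length_lt [DecidableEq B] {n : ℕ} (h : Walk E u w (p ++ b :: q))
    (hn : n ≤ q.dedup.length) :
    ∃ p' q', Walk E u w (p' ++ b :: q') ∧ q' <+ q ∧ n ≤ q'.dedup.length ∧
      (p' ++ b :: q').length < (n + 2) * Fintype.card V := by
  obtain ⟨m, hp, hbq⟩ := append_iff.1 h
  obtain ⟨m', hb, hq⟩ := cons_iff.1 hbq
  obtain ⟨p', hp', -, hplt⟩ := hp.exists_sublist_length_lt_card
  have hd : (q.dedup.take n).length = n := List.length_take_of_le hn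
  obtain ⟨q', hq', hdq, hsub, hqlt⟩ :=
    hq.exists_sublist_between ((List.take_sublist n _).trans (List.dedup_sublist q))
  refine ⟨p', q', append_iff.2 ⟨m, hp', .cons hb hq'⟩, hsub, ?_, ?_⟩
  · rw [← hd]
    have hnodup : (q.dedup.take n).Nodup := (List.nodup_dedup q).sublist (List.take_sublist n _)
    exact (hnodup.subperm fun _ ha ↦ List.mem_dedup.2 (hdq.subset ha)).length_le
  · rw [hd] at hqlt
    rw [List.length_append, List.length_cons]
    linarith

end Walk

theorem lru_exist_miss_short_witness_general {V B : Type*} [Fintype V] [DecidableEq B]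
    (E : V → B → V → Prop) (S F : V) (N : ℕ) (x : B) (t : List B)
    (hwalk : Walk E S F t) (hx : x ∉ lruRun N ([] : List B) t) :
    ∃ t' : List B, Walk E S F t' ∧
      t'.length < (min t.toFinset.card (max N 1 + 1) + 1) * Fintype.card V ∧
      x ∉ lruRun N ([] : List B) t' := by
  by_cases hxt : x ∈ t
  · obtain ⟨p, s, rfl, hxs⟩ := exists_eq_append_cons_notMem_right hxt
    rw [mem_lruRun_append_cons_iff List.nodup_nil (Nat.zero_le _) p hxs, not_lt] at hx
    obtain ⟨p', s', hwalk', hsub, hN, hlen⟩ := hwalk.exists_append_cons_length_lt hx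
    have hcard : max N 1 + 1 ≤ (p ++ x :: s).toFinset.card := by
      calc max N 1 + 1 ≤ (x :: s).dedup.length := by simpa [hxs] using hx
        _ = (x :: s).toFinset.card := (List.card_toFinset _).symm
        _ ≤ (p ++ x :: s).toFinset.card :=
          Finset.card_le_card (by rw [List.toFinset_append]; exact Finset.subset_union_right)
    refine ⟨p' ++ x :: s', hwalk', by rwa [min_eq_right hcard], ?_⟩
    have hxs' : x ∉ s' := fun h ↦ hxs (hsub.subset h)
    rwa [mem_lruRun_append_cons_iff List.nodup_nil (Nat.zero_le _) p' hxs', not_lt]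
  · obtain ⟨t', hwalk', hsub, hlen⟩ := hwalk.exists_sublist_length_lt_card
    refine ⟨t', hwalk', hlen.trans_le (Nat.le_mul_of_pos_left _ (Nat.succ_pos _)), ?_⟩
    exact fun hmem ↦ hxt (hsub.subset (lruRun_subset N [] t' hmem))

/-- if some walk from `S` to `F` leaves `x` out of the LRU cache
(starting from the empty cache), then some walk of length at most
`2 * Fintype.card V * Fintype.card B` does, so LRU exist-miss is in NP even
for cyclic control-flow graphs. -/
theorem lru_exist_miss_short_witness {V B : Type*} [Fintype V] [Fintype B] [DecidableEq B]
    (E : V → B → V → Prop) (S F : V) (N : ℕ) (x : B) (t : List B)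
    (hwalk : Walk E S F t) (hx : x ∉ lruRun N ([] : List B) t) :
    ∃ t' : List B, Walk E S F t' ∧
      t'.length ≤ 2 * Fintype.card V * Fintype.card B ∧
      x ∉ lruRun N ([] : List B) t' := by
  obtain ⟨t', hwalk', hlen, hmiss⟩ :=
    lru_exist_miss_short_witness_general E S F N x t hwalk hx
  have hblocks : min t.toFinset.card (max N 1 + 1) ≤ Fintype.card B :=
    (min_le_left _ _).trans t.toFinset.card_le_univ
  have hB : 0 < Fintype.card B := Fintype.card_pos_iff.2 ⟨x⟩
  exact ⟨t', hwalk', by nlinarith, hmiss⟩
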